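/- For every η ∈ (0,1) and q ∈ [2,∞) there exists a constant K = K(η,q) ∈ (0,∞) with the following property. If (X,‖·‖_X) is a Banach space satisfying δ_X(ε) ≥ (ηε)^q for every ε ∈ (0,1), then for every integer n ≥ 2 the bi-Lipschitz distortion of the ball B_n satisfies c_X(B_n, d_W) ≥ K (log n)^{1/q}; equivalently, if D ≥ 1 and f : B_n → X satisfies d_W(x,y) ≤ ‖f(x)−f(y)‖_X ≤ D·d_W(x,y) for all x,y ∈ B_n, then D ≥ K (log n)^{1/q}. -/

import Mathlib

/-- The discrete Heisenberg group, as ℤ³ with the Heisenberg multiplication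
(equivalently, unit upper-triangular 3×3 integer matrices). -/
@[ext]
structure DH where
  x : ℤ
  y : ℤ
  z : ℤ

namespace DH

instance : Mul DH := ⟨fun a b => ⟨a.x + b.x, a.y + b.y, a.z + b.z + a.x * b.y⟩⟩
instance : One DH := ⟨⟨0, 0, 0⟩⟩
instance : Inv DH := ⟨fun a => ⟨-a.x, -a.y, -a.z + a.x * a.y⟩⟩

lemma mul_def (a b : DH) : a * b = ⟨a.x + b.x, a.y + b.y, a.z + b.z + a.x * b.y⟩ := rfl
lemma one_def : (1 : DH) = ⟨0, 0, 0⟩ := rfl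
lemma inv_def (a : DH) : a⁻¹ = ⟨-a.x, -a.y, -a.z + a.x * a.y⟩ := rfl

instance : Group DH where
  mul_assoc a b c := by
    simp only [mul_def, mk.injEq]
    refine ⟨by ring, by ring, by ring⟩
  one_mul a := by simp [mul_def, one_def]
  mul_one a := by simp [mul_def, one_def]
  inv_mul_cancel a := by
    simp only [mul_def, inv_def, one_def, mk.injEq]
    refine ⟨by ring, by ring, by ring⟩

/-- The generator `a`. -/
def gA : DH := ⟨1, 0, 0⟩

/-- The generator `b`. -/
def gB : DH := ⟨0, 1, 0⟩

/-- The commutator `c = aba⁻¹b⁻¹`, a generator of the center. -/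
def gC : DH := gA * gB * gA⁻¹ * gB⁻¹

/-- Word length with respect to the symmetric generating set `{a, b, a⁻¹, b⁻¹}`. -/
noncomputable def wordLen (g : DH) : ℕ :=
  sInf {n | ∃ l : List DH, l.length = n ∧
    (∀ s ∈ l, s ∈ ({gA, gB, gA⁻¹, gB⁻¹} : Set DH)) ∧ l.prod = g}

/-- The left-invariant word metric on the discrete Heisenberg group. -/
noncomputable def dW (g h : DH) : ℕ := wordLen (g⁻¹ * h)

/-- The closed ball of radius `n` centered at the identity. -/
def Ball (n : ℕ) : Set DH := {g | dW g 1 ≤ n}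

end DH

/-!
Since `c ^ m` has word length comparable to `√m`, an embedding `f` of distortion `D` moves points
by at least `√2 ^ m` along `c ^ 2 ^ m`, at each of the roughly `log n` dyadic scales that fit into
the ball. Cut off, `f` becomes an element `F` of `ℓ^q(ℍ; X)`, on which `ℍ` acts isometrically by
right translation, and uniform convexity passes from `X` to `ℓ^q(ℍ; X)`.

Let `T` be the action of `c` and let `A m` be the Birkhoff average of `T` over `2 ^ m` steps. As
`A (m + 1) u` is the midpoint of `A m u` and `T ^ 2 ^ m (A m u)`, uniform convexity telescopes to
`∑ m, ‖A m (u - T ^ 2 ^ m u)‖ ^ q ≲ ‖u‖ ^ q`. Because `c` is central, taking `u` to be the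
differences of `F` along `a` and `b` controls the horizontal gradients of
`v m = A m (F - T ^ 2 ^ m F)`, hence `‖v m - T ^ 2 ^ m (v m)‖`, hence `‖v m‖`. The resulting bound
for `‖F - T ^ 2 ^ m F‖` involves the same quantity at other scales, which Hardy's inequality
absorbs after summation. By Hölder's inequality, if `J` is the number of scales, then
`∑ m < J, ‖F - T ^ 2 ^ m F‖ / √2 ^ m ≲ J ^ (1 - 1 / q) ‖∇F‖`, while the left-hand side is at least
of order `J ‖∇F‖ / D`.
-/

section RealInequalities

lemma rpow_le_mul_rpow_of_le_mul {k t x y : ℝ} (hk : 1 ≤ k) (ht0 : 0 ≤ t) (ht1 : t ≤ 1)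
    (hx : 0 ≤ x) (hy : 0 ≤ y) (h : x ≤ k * y) : x ^ t ≤ k * y ^ t := by
  calc x ^ t ≤ (k * y) ^ t := by gcongr
    _ = k ^ t * y ^ t := Real.mul_rpow (by positivity) hy
    _ ≤ k * y ^ t := by gcongr; exact Real.rpow_le_self_of_one_le hk ht1

lemma log_le_natLog_two_add_one {n : ℕ} (hn : 0 < n) : Real.log n ≤ Nat.log 2 n + 1 := by
  have hpow : (n : ℝ) ≤ 2 ^ (Nat.log 2 n + 1) := by
    exact_mod_cast (Nat.lt_pow_succ_log_self one_lt_two n).le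
  calc Real.log n ≤ Real.log (2 ^ (Nat.log 2 n + 1)) := by gcongr
    _ = (Nat.log 2 n + 1) * Real.log 2 := by rw [Real.log_pow]; push_cast; ring
    _ ≤ Nat.log 2 n + 1 :=
        mul_le_of_le_one_right (by positivity) (Real.log_two_lt_d9.le.trans (by norm_num))

lemma sum_le_card_rpow_mul_of_sum_rpow_le {ι : Type*} {s : Finset ι} {x : ι → ℝ} {q B : ℝ}
    (hq : 1 ≤ q) (hB : 0 ≤ B) (hx : ∀ i ∈ s, 0 ≤ x i) (h : ∑ i ∈ s, x i ^ q ≤ B ^ q) :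
    ∑ i ∈ s, x i ≤ (s.card : ℝ) ^ (1 - 1 / q) * B := by
  have hq0 : 0 < q := zero_lt_one.trans_le hq
  refine (Real.rpow_le_rpow_iff (Finset.sum_nonneg hx) (by positivity) hq0).1 ?_
  calc (∑ i ∈ s, x i) ^ q ≤ (s.card : ℝ) ^ (q - 1) * B ^ q :=
        (Real.rpow_sum_le_const_mul_sum_rpow_of_nonneg s hq hx).trans (by gcongr)
    _ = ((s.card : ℝ) ^ (1 - 1 / q) * B) ^ q := by
        rw [Real.mul_rpow (by positivity) hB, ← Real.rpow_mul (by positivity), sub_mul,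
          one_div_mul_cancel hq0.ne', one_mul]

lemma abs_sum_range_add_sub_sum_range_le {x : ℕ → ℝ} {M : ℝ} (hx : ∀ m, x m ∈ Set.Icc 0 M)
    (J k : ℕ) :
    |∑ m ∈ Finset.range J, x (m + k) - ∑ m ∈ Finset.range J, x m| ≤ k * M := by
  induction k with
  | zero => simp
  | succ k ih =>
    have hstep : ∑ m ∈ Finset.range J, x (m + (k + 1)) - ∑ m ∈ Finset.range J, x (m + k)
        = x (J + k) - x k := by
      have h := Finset.sum_range_sub (fun m => x (m + k)) J
      simpa only [Finset.sum_sub_distrib, zero_add, add_right_comm _ 1 k, add_assoc] using h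
    have hbd : |x (J + k) - x k| ≤ M :=
      abs_sub_le_of_nonneg_of_le (hx _).1 (hx _).2 (hx _).1 (hx _).2
    have htri := abs_sub_le (∑ m ∈ Finset.range J, x (m + (k + 1)))
      (∑ m ∈ Finset.range J, x (m + k)) (∑ m ∈ Finset.range J, x m)
    rw [hstep] at htri
    push_cast
    linarith

/-- Exchanging the order of summation leaves the geometric tail `∑_{m > l} r⁻ᵐ = r⁻ˡ / (r - 1)`. -/
lemma sub_one_mul_sum_sum_range_div_pow_le {x : ℕ → ℝ} (hx : ∀ m, 0 ≤ x m) {r : ℝ} (hr : 0 < r)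
    (J : ℕ) :
    (r - 1) * ∑ m ∈ Finset.range J, (∑ l ∈ Finset.range m, x l) / r ^ m ≤
      ∑ m ∈ Finset.range J, x m / r ^ m := by
  have h : (r - 1) * ∑ m ∈ Finset.range J, (∑ l ∈ Finset.range m, x l) / r ^ m
      + r * ((∑ l ∈ Finset.range J, x l) / r ^ J) = ∑ m ∈ Finset.range J, x m / r ^ m := by
    induction J with
    | zero => simp
    | succ J ih =>
      rw [Finset.sum_range_succ, Finset.sum_range_succ x, Finset.sum_range_succ _ J, ← ih, pow_succ]
      field_simp
      ring
  have hend : 0 ≤ r * ((∑ l ∈ Finset.range J, x l) / r ^ J) :=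
    mul_nonneg hr.le (div_nonneg (Finset.sum_nonneg fun l _ => hx l) (pow_nonneg hr.le J))
  linarith

lemma sqrt_two_pow (m : ℕ) : √(2 ^ m) = √2 ^ m :=
  (Real.sqrt_eq_iff_eq_sq (by positivity) (by positivity)).2 (by
    rw [← pow_mul, mul_comm, pow_mul, Real.sq_sqrt zero_le_two])

/-- In units of `√2 ^ m` the term `x (m + 4)` counts four times, while Hardy's inequality bounds
the partial sums by `5 / 2` and the term `x (m + 8) / 16` counts once, so they can be absorbed. -/
lemma sum_div_sqrt_two_pow_le_of_recursion {x y : ℕ → ℝ} {M : ℝ} (hx : ∀ m, 0 ≤ x m)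
    (hxM : ∀ m, x m ≤ M * √2 ^ m)
    (hrec : ∀ m, x (m + 4) ≤ ∑ l ∈ Finset.range m, x l + y m + x (m + 8) / 16) (J : ℕ) :
    ∑ m ∈ Finset.range J, x m / √2 ^ m ≤
      48 * M + 2 * ∑ m ∈ Finset.range J, y m / √2 ^ m := by
  have hroot : 7 / 5 ≤ √2 := Real.le_sqrt_of_sq_le (by norm_num)
  have hpow (m : ℕ) : 0 < √2 ^ m := by positivity
  have hpow4 (m : ℕ) : √2 ^ (m + 4) = 4 * √2 ^ m := by
    rw [pow_add, pow_mul √2 2 2, Real.sq_sqrt zero_le_two]; ring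
  set t : ℕ → ℝ := fun m => x m / √2 ^ m with ht
  have htM (m : ℕ) : t m ∈ Set.Icc 0 M :=
    ⟨div_nonneg (hx m) (hpow m).le, (div_le_iff₀ (hpow m)).2 (hxM m)⟩
  have hstep (m : ℕ) :
      4 * t (m + 4) ≤ (∑ l ∈ Finset.range m, x l) / √2 ^ m + y m / √2 ^ m + t (m + 8) := by
    have h4 : 4 * t (m + 4) = x (m + 4) / √2 ^ m := by
      simp only [ht, hpow4]; ring
    have h8 : t (m + 8) = x (m + 8) / 16 / √2 ^ m := by
      simp only [ht, show m + 8 = m + 4 + 4 from rfl, hpow4]; ring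
    rw [h4, h8, ← add_div, ← add_div]
    exact div_le_div_of_nonneg_right (hrec m) (hpow m).le
  have hsum := Finset.sum_le_sum fun m (_ : m ∈ Finset.range J) => hstep m
  simp only [Finset.sum_add_distrib, ← Finset.mul_sum] at hsum
  have hhardy := sub_one_mul_sum_sum_range_div_pow_le hx (by positivity : 0 < √2) J
  have hpartial : 0 ≤ ∑ m ∈ Finset.range J, (∑ l ∈ Finset.range m, x l) / √2 ^ m :=
    Finset.sum_nonneg fun m _ => div_nonneg (Finset.sum_nonneg fun l _ => hx l) (hpow m).le
  have hshift4 := abs_le.1 (abs_sum_range_add_sub_sum_range_le htM J 4)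
  have hshift8 := abs_le.1 (abs_sum_range_add_sub_sum_range_le htM J 8)
  push_cast at hshift4 hshift8
  nlinarith

end RealInequalities

section Isometries

variable {E : Type*} [NormedAddCommGroup E] [NormedSpace ℝ E]

lemma norm_sub_list_prod_le (l : List (E →ₗᵢ[ℝ] E)) (u : E) :
    ‖u - l.prod u‖ ≤ (l.map fun T => ‖u - T u‖).sum := by
  induction l with
  | nil => simp
  | cons T l ih =>
    have h : u - (T :: l).prod u = (u - T u) + T (u - l.prod u) := by simp
    rw [h, List.map_cons, List.sum_cons]
    refine (norm_add_le _ _).trans ?_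
    rw [T.norm_map]
    gcongr

lemma norm_sub_pow_le (T : E →ₗᵢ[ℝ] E) (n : ℕ) (u : E) :
    ‖u - (T ^ n) u‖ ≤ n * ‖u - T u‖ := by
  simpa using norm_sub_list_prod_le (List.replicate n T) u

/-- The Birkhoff average `n⁻¹ ∑_{i < n} Tⁱ` of a linear isometry, as a linear operator; it is `0`
for `n = 0`. -/
noncomputable def birkhoffMean (T : E →ₗᵢ[ℝ] E) (n : ℕ) : E →ₗ[ℝ] E :=
  (n : ℝ)⁻¹ • ∑ i ∈ Finset.range n, (T ^ i).toLinearMap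

variable (T : E →ₗᵢ[ℝ] E)

lemma birkhoffMean_apply (n : ℕ) (u : E) :
    birkhoffMean T n u = (n : ℝ)⁻¹ • ∑ i ∈ Finset.range n, (T ^ i) u := by
  simp [birkhoffMean]

lemma birkhoffMean_one (u : E) : birkhoffMean T 1 u = u := by simp [birkhoffMean_apply]

lemma map_birkhoffMean {S T : E →ₗᵢ[ℝ] E} (h : Commute S T) (n : ℕ) (u : E) :
    S (birkhoffMean T n u) = birkhoffMean T n (S u) := by
  simp only [birkhoffMean_apply, map_smul, map_sum]
  congr! 2 with i
  exact DFunLike.congr_fun (h.pow_right i).eq u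

lemma birkhoffMean_sub_map (n : ℕ) (u : E) :
    birkhoffMean T n (u - T u) = (n : ℝ)⁻¹ • (u - (T ^ n) u) := by
  have h (i : ℕ) : (T ^ i) (u - T u) = (T ^ i) u - (T ^ (i + 1)) u := by
    rw [map_sub, pow_succ]; rfl
  simp only [birkhoffMean_apply, h, Finset.sum_range_sub', pow_zero, LinearIsometry.coe_one, id_eq]

lemma birkhoffMean_two_mul (n : ℕ) (u : E) :
    birkhoffMean T (2 * n) u =
      (2⁻¹ : ℝ) • (birkhoffMean T n u + (T ^ n) (birkhoffMean T n u)) := by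
  simp only [birkhoffMean_apply, two_mul n, Finset.sum_range_add, pow_add, map_smul, map_sum,
    ← smul_add, smul_smul, LinearIsometry.coe_mul, Function.comp_apply]
  congr 1
  rw [← two_mul, Nat.cast_mul, mul_inv, Nat.cast_two]

lemma norm_birkhoffMean_le (n : ℕ) (u : E) : ‖birkhoffMean T n u‖ ≤ ‖u‖ := by
  rw [birkhoffMean_apply, norm_smul, norm_inv, Real.norm_natCast]
  have h : ‖∑ i ∈ Finset.range n, (T ^ i) u‖ ≤ n * ‖u‖ := by
    simpa using norm_sum_le (Finset.range n) fun i => (T ^ i) u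
  exact inv_mul_le_of_le_mul₀ n.cast_nonneg (norm_nonneg u) h

lemma norm_sub_birkhoffMean_le {n : ℕ} (hn : 0 < n) (u : E) :
    ‖u - birkhoffMean T n u‖ ≤ n * ‖u - T u‖ := by
  have hn' : (0 : ℝ) < n := by exact_mod_cast hn
  have h : u - birkhoffMean T n u = (n : ℝ)⁻¹ • ∑ i ∈ Finset.range n, (u - (T ^ i) u) := by
    rw [birkhoffMean_apply, Finset.sum_sub_distrib, Finset.sum_const, Finset.card_range, smul_sub,
      ← Nat.cast_smul_eq_nsmul ℝ, inv_smul_smul₀ hn'.ne']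
  rw [h, norm_smul, norm_inv, Real.norm_natCast, inv_mul_le_iff₀ hn']
  calc ‖∑ i ∈ Finset.range n, (u - (T ^ i) u)‖
      ≤ ∑ _i ∈ Finset.range n, n * ‖u - T u‖ := norm_sum_le_of_le _ fun i hi => by
        refine (norm_sub_pow_le T i u).trans ?_
        gcongr
        exact (Finset.mem_range.1 hi).le
    _ = n * (n * ‖u - T u‖) := by simp

lemma norm_sub_birkhoffMean_two_mul_le (n : ℕ) (u : E) :
    ‖u - birkhoffMean T (2 * n) u‖ ≤ ‖u - birkhoffMean T n u‖ + ‖u - (T ^ n) u‖ / 2 := by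
  have h : u - birkhoffMean T (2 * n) u
      = (u - birkhoffMean T n u) + (2⁻¹ : ℝ) • birkhoffMean T n (u - (T ^ n) u) := by
    rw [birkhoffMean_two_mul, map_birkhoffMean (Commute.pow_self T n), map_sub]
    module
  rw [h]
  refine (norm_add_le _ _).trans ?_
  rw [norm_smul, Real.norm_of_nonneg (by norm_num), inv_mul_eq_div]
  gcongr
  exact norm_birkhoffMean_le T n _

lemma norm_sub_birkhoffMean_two_pow_le (k : ℕ) (u : E) :
    ‖u - birkhoffMean T (2 ^ k) u‖ ≤ (∑ l ∈ Finset.range k, ‖u - (T ^ 2 ^ l) u‖) / 2 := by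
  induction k with
  | zero => simp [birkhoffMean_one]
  | succ k ih =>
    rw [pow_succ', Finset.sum_range_succ, add_div]
    exact (norm_sub_birkhoffMean_two_mul_le T _ u).trans (by gcongr)

lemma norm_sub_pow_mul_le (n a : ℕ) (u : E) :
    ‖u - (T ^ (n * a)) u‖ ≤
      2 * ‖u - birkhoffMean T n u‖ + a * ‖birkhoffMean T n (u - (T ^ n) u)‖ := by
  set w := birkhoffMean T n u
  have hw : birkhoffMean T n (u - (T ^ n) u) = w - (T ^ n) w := by
    rw [map_sub, ← map_birkhoffMean (Commute.pow_self T n)]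
  have hdec : u - (T ^ (n * a)) u
      = (u - w) - (T ^ (n * a)) (u - w) + (w - (T ^ (n * a)) w) := by
    rw [map_sub]; abel
  calc ‖u - (T ^ (n * a)) u‖
      ≤ ‖u - w‖ + ‖(T ^ (n * a)) (u - w)‖ + ‖w - (T ^ (n * a)) w‖ := by
        rw [hdec]
        exact (norm_add_le _ _).trans (by gcongr; exact norm_sub_le _ _)
    _ ≤ ‖u - w‖ + ‖u - w‖ + a * ‖w - (T ^ n) w‖ := by
        rw [LinearIsometry.norm_map, pow_mul]
        gcongr
        exact norm_sub_pow_le (T ^ n) a w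
    _ = _ := by rw [hw]; ring

lemma norm_birkhoffMean_sub_pow_le (n : ℕ) {b : ℕ} (hb : 0 < b) (u : E) {v : E}
    (hv : v = birkhoffMean T n (u - (T ^ n) u)) :
    ‖v‖ ≤ b * ‖v - (T ^ n) v‖ + (b : ℝ)⁻¹ * ‖u - (T ^ (n * b)) u‖ := by
  have hmean : birkhoffMean (T ^ n) b v
      = (b : ℝ)⁻¹ • birkhoffMean T n (u - (T ^ (n * b)) u) := by
    have hw : v = birkhoffMean T n u - (T ^ n) (birkhoffMean T n u) := by
      rw [hv, map_sub, ← map_birkhoffMean (Commute.pow_self T n)]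
    rw [hw, birkhoffMean_sub_map, ← pow_mul, map_birkhoffMean (Commute.pow_self T _), ← map_sub]
  calc ‖v‖ ≤ ‖v - birkhoffMean (T ^ n) b v‖ + ‖birkhoffMean (T ^ n) b v‖ := by
        simpa using norm_add_le (v - birkhoffMean (T ^ n) b v) (birkhoffMean (T ^ n) b v)
    _ ≤ b * ‖v - (T ^ n) v‖ + (b : ℝ)⁻¹ * ‖u - (T ^ (n * b)) u‖ := by
        rw [hmean, norm_smul, norm_inv, Real.norm_natCast, ← hmean]
        gcongr
        · exact norm_sub_birkhoffMean_le _ hb v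
        · exact norm_birkhoffMean_le T n _

end Isometries

section UniformConvexity

variable {X : Type*} [NormedAddCommGroup X] [NormedSpace ℝ X]

/-- The modulus of uniform convexity of `X` satisfies `δ_X(ε) ≥ (η ε) ^ q` for `ε ∈ (0, 1)`. -/
def HasConvexityModulus (X : Type*) [NormedAddCommGroup X] (η q : ℝ) : Prop :=
  ∀ ε ∈ Set.Ioo (0 : ℝ) 1, ∀ x y : X, ‖x‖ = 1 → ‖y‖ = 1 → ε ≤ ‖x - y‖ →
    ‖x + y‖ ≤ 2 * (1 - (η * ε) ^ q)

/-- The two-point form of uniform convexity of power type `q` with constant `c`. Unlike a modulus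
of convexity it is homogeneous, which is what makes it pass to `ℓ^q` sums. -/
def TwoPointConvex (X : Type*) [NormedAddCommGroup X] (c q : ℝ) : Prop :=
  ∀ u v : X, (‖u + v‖ / 2) ^ q + (c * ‖u - v‖) ^ q ≤ (‖u‖ ^ q + ‖v‖ ^ q) / 2

lemma rpow_half_add_add_rpow_half_sub_le {a b q : ℝ} (hq : 2 ≤ q) (hb : 0 ≤ b) (hab : b ≤ a) :
    ((a + b) / 2) ^ q + ((a - b) / 2) ^ q ≤ (a ^ q + b ^ q) / 2 := by
  have ha : 0 ≤ a := hb.trans hab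
  have hq' : 1 ≤ q / 2 := by linarith
  have hsq {x : ℝ} (hx : 0 ≤ x) : x ^ q = (x ^ 2) ^ (q / 2) := by
    rw [← Real.rpow_natCast_mul hx]; congr 1; push_cast; ring
  have hconv := (convexOn_rpow hq').2 (sq_nonneg a) (sq_nonneg b)
    (by norm_num : (0 : ℝ) ≤ 1 / 2) (by norm_num : (0 : ℝ) ≤ 1 / 2) (by norm_num)
  simp only [smul_eq_mul] at hconv
  calc ((a + b) / 2) ^ q + ((a - b) / 2) ^ q
      = (((a + b) / 2) ^ 2) ^ (q / 2) + (((a - b) / 2) ^ 2) ^ (q / 2) := by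
        rw [hsq (by linarith), hsq (by linarith : 0 ≤ (a - b) / 2)]
    _ ≤ (((a + b) / 2) ^ 2 + ((a - b) / 2) ^ 2) ^ (q / 2) :=
        Real.add_rpow_le_rpow_add (sq_nonneg _) (sq_nonneg _) hq'
    _ = (1 / 2 * a ^ 2 + 1 / 2 * b ^ 2) ^ (q / 2) := by congr 1; ring
    _ ≤ (a ^ q + b ^ q) / 2 := by rw [hsq ha, hsq hb]; linarith

lemma sub_rpow_le_rpow_mul_one_sub {s t q : ℝ} (hq : 1 ≤ q) (ht : 0 ≤ t) (hts : t ≤ s)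
    (hs : s ≤ 1) : (s - t) ^ q ≤ s ^ q * (1 - t) := by
  rcases (ht.trans hts).eq_or_lt with rfl | hs0
  · simp [le_antisymm hts ht]
  have hts' : t / s ≤ 1 := (div_le_one hs0).2 hts
  calc (s - t) ^ q = s ^ q * (1 - t / s) ^ q := by
        rw [← Real.mul_rpow hs0.le (sub_nonneg.2 hts'), mul_sub, mul_one, mul_div_cancel₀ _ hs0.ne']
    _ ≤ s ^ q * (1 - t / s) := by
        gcongr
        exact Real.rpow_le_self_of_le_one (sub_nonneg.2 hts') (sub_le_self _ (by positivity)) hq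
    _ ≤ s ^ q * (1 - t) := by
        gcongr
        exact le_div_self ht hs0 hs

lemma HasConvexityModulus.norm_add_smul_le {η q : ℝ} (hX : HasConvexityModulus X η q) {ε r : ℝ}
    (hε : ε ∈ Set.Ioo (0 : ℝ) 1) (hr : r ∈ Set.Icc (0 : ℝ) 1) {u w : X} (hu : ‖u‖ = 1)
    (hw : ‖w‖ = 1) (huw : ε ≤ ‖u - w‖) :
    ‖u + r • w‖ / 2 ≤ (1 + r) / 2 - r * (η * ε) ^ q := by
  have hdec : u + r • w = (1 - r) • u + r • (u + w) := by module
  have htri : ‖u + r • w‖ ≤ (1 - r) + r * ‖u + w‖ := by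
    rw [hdec]
    refine (norm_add_le _ _).trans_eq ?_
    rw [norm_smul, norm_smul, hu, mul_one, Real.norm_of_nonneg (sub_nonneg.2 hr.2),
      Real.norm_of_nonneg hr.1]
  have hmod := mul_le_mul_of_nonneg_left (hX ε hε u w hu hw huw) hr.1
  linarith

/-- When the lengths of `u` and `v` differ little compared to `‖u - v‖`, the modulus applies to
`u` and the radial projection of `v` to the unit sphere. -/
lemma HasConvexityModulus.rpow_norm_add_le {η q : ℝ} (hX : HasConvexityModulus X η q) (hη : 0 ≤ η)
    (hq : 1 ≤ q) {u v : X} (hu : ‖u‖ = 1) (hv : ‖v‖ ≤ 1) (huv : 1 - ‖v‖ < ‖u - v‖ / 4) :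
    (‖u + v‖ / 2) ^ q + (η / 8 * ‖u - v‖) ^ q ≤ ((1 + ‖v‖) / 2) ^ q := by
  set r := ‖v‖
  set d := ‖u - v‖ with hd
  have hd2 : d ≤ 1 + r := hu ▸ norm_sub_le u v
  have hd0 : 0 < d := by linarith
  have hr0 : 0 < r := by linarith
  obtain ⟨w, hw, hvw⟩ : ∃ w : X, ‖w‖ = 1 ∧ r • w = v :=
    ⟨r⁻¹ • v, norm_smul_inv_norm (𝕜 := ℝ) (norm_pos_iff.1 hr0), smul_inv_smul₀ hr0.ne' v⟩
  have huw : 3 * d / 8 ≤ ‖u - w‖ := by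
    have htri := norm_add_le (u - w) ((1 - r) • w)
    rw [show u - w + (1 - r) • w = u - r • w by module, hvw, norm_smul, hw,
      Real.norm_of_nonneg (by linarith), ← hd] at htri
    linarith
  set θ := (η * (3 * d / 8)) ^ q with hθ
  have hmid : ‖u + v‖ / 2 ≤ (1 + r) / 2 - r * θ :=
    hvw ▸ hX.norm_add_smul_le ⟨by linarith, by linarith⟩ ⟨hr0.le, hv⟩ hu hw huw
  have hmid0 : 0 ≤ (1 + r) / 2 - r * θ := (by positivity : (0 : ℝ) ≤ _).trans hmid
  have hgain : (η / 8 * d) ^ q ≤ ((1 + r) / 2) ^ q * (r * θ) :=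
    calc (η / 8 * d) ^ q = 2 * (1 / 2 * (η / 8 * d) ^ q) := by ring
      _ ≤ (9 / 4) ^ q * (r * (η / 8 * d) ^ q) := by
          gcongr
          · exact le_trans (by norm_num) (Real.self_le_rpow_of_one_le (by norm_num) hq)
          · linarith
      _ = (3 / 4) ^ q * (r * θ) := by
          rw [hθ, show (9 / 4 : ℝ) = 3 / 4 * 3 by norm_num,
            show η * (3 * d / 8) = 3 * (η / 8 * d) by ring,
            Real.mul_rpow (by norm_num) (by norm_num),
            Real.mul_rpow (x := 3) (by norm_num) (by positivity)]
          ring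
      _ ≤ ((1 + r) / 2) ^ q * (r * θ) := by
          gcongr ?_ ^ q * _
          linarith
  have hpow : (‖u + v‖ / 2) ^ q ≤ ((1 + r) / 2) ^ q * (1 - r * θ) :=
    (Real.rpow_le_rpow (by positivity) hmid (by linarith)).trans
      (sub_rpow_le_rpow_mul_one_sub hq (by positivity) (by linarith) (by linarith))
  linarith

lemma HasConvexityModulus.twoPoint_of_norm_eq_one {η q : ℝ} (hX : HasConvexityModulus X η q)
    (hη : 0 ≤ η) (hη1 : η ≤ 1) (hq : 2 ≤ q) {u v : X} (hu : ‖u‖ = 1) (hv : ‖v‖ ≤ 1) :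
    (‖u + v‖ / 2) ^ q + (η / 8 * ‖u - v‖) ^ q ≤ (‖u‖ ^ q + ‖v‖ ^ q) / 2 := by
  have hscalar := rpow_half_add_add_rpow_half_sub_le hq (norm_nonneg v) hv
  rw [← hu] at hscalar
  refine le_trans ?_ hscalar
  rcases le_or_gt (‖u - v‖ / 4) (1 - ‖v‖) with hradial | hangular
  · gcongr
    · exact norm_add_le u v
    · have : η * ‖u - v‖ ≤ ‖u - v‖ := mul_le_of_le_one_left (norm_nonneg _) hη1
      linarith
  · have h := hX.rpow_norm_add_le hη (by linarith) hu hv hangular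
    rw [hu]
    exact h.trans (le_add_of_nonneg_right (Real.rpow_nonneg (by linarith) q))

theorem HasConvexityModulus.twoPointConvex {η q : ℝ} (hX : HasConvexityModulus X η q)
    (hη : 0 ≤ η) (hη1 : η ≤ 1) (hq : 2 ≤ q) : TwoPointConvex X (η / 8) q := by
  intro u v
  wlog huv : ‖v‖ ≤ ‖u‖ generalizing u v
  · rw [add_comm u, norm_sub_rev, add_comm (‖u‖ ^ q)]
    exact this v u (le_of_not_ge huv)
  rcases (norm_nonneg u).eq_or_lt with hu | hu
  · have hu0 : u = 0 := norm_eq_zero.1 hu.symm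
    have hv0 : v = 0 := norm_le_zero_iff.1 (hu ▸ huv)
    simp [hu0, hv0, Real.zero_rpow (by linarith : q ≠ 0)]
  · have hunit := hX.twoPoint_of_norm_eq_one hη hη1 hq (u := ‖u‖⁻¹ • u) (v := ‖u‖⁻¹ • v)
      (by rw [norm_smul, norm_inv, norm_norm, inv_mul_cancel₀ hu.ne'])
      (by rwa [norm_smul, norm_inv, norm_norm, inv_mul_le_one₀ hu])
    have hc : 0 ≤ ‖u‖⁻¹ := by positivity
    rw [← smul_add, ← smul_sub] at hunit
    simp only [norm_smul, norm_inv, norm_norm, mul_div_assoc, mul_left_comm (η / 8)] at hunit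
    rw [Real.mul_rpow hc (by positivity), Real.mul_rpow hc (by positivity),
      Real.mul_rpow hc (by positivity), Real.mul_rpow hc (by positivity), ← mul_add, ← mul_add,
      mul_div_assoc] at hunit
    exact le_of_mul_le_mul_left hunit (by positivity)

variable {c q : ℝ}

lemma TwoPointConvex.sum_rpow_norm_birkhoffMean_le (hX : TwoPointConvex X c q) (T : X →ₗᵢ[ℝ] X)
    (J : ℕ) (u : X) :
    ∑ k ∈ Finset.range J, (c * ‖birkhoffMean T (2 ^ k) (u - (T ^ 2 ^ k) u)‖) ^ q ≤ ‖u‖ ^ q := by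
  suffices h : ∑ k ∈ Finset.range J, (c * ‖birkhoffMean T (2 ^ k) (u - (T ^ 2 ^ k) u)‖) ^ q
      + ‖birkhoffMean T (2 ^ J) u‖ ^ q ≤ ‖u‖ ^ q from
    (le_add_of_nonneg_right (by positivity)).trans h
  induction J with
  | zero => simp [birkhoffMean_one]
  | succ J ih =>
    have h := hX (birkhoffMean T (2 ^ J) u) ((T ^ 2 ^ J) (birkhoffMean T (2 ^ J) u))
    have hnorm : ‖birkhoffMean T (2 ^ (J + 1)) u‖
        = ‖birkhoffMean T (2 ^ J) u + (T ^ 2 ^ J) (birkhoffMean T (2 ^ J) u)‖ / 2 := by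
      rw [pow_succ', birkhoffMean_two_mul, norm_smul, Real.norm_of_nonneg (by norm_num),
        inv_mul_eq_div]
    rw [← hnorm, LinearIsometry.norm_map, map_birkhoffMean (Commute.pow_self T _), ← map_sub] at h
    rw [Finset.sum_range_succ]
    linarith

lemma TwoPointConvex.sum_norm_birkhoffMean_le (hX : TwoPointConvex X c q) (hc : 0 < c) (hq : 1 ≤ q)
    (T : X →ₗᵢ[ℝ] X) (J : ℕ) (u : X) :
    ∑ k ∈ Finset.range J, ‖birkhoffMean T (2 ^ k) (u - (T ^ 2 ^ k) u)‖ ≤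
      (J : ℝ) ^ (1 - 1 / q) * ‖u‖ / c := by
  rw [le_div_iff₀' hc, Finset.mul_sum]
  simpa using sum_le_card_rpow_mul_of_sum_rpow_le hq (norm_nonneg u) (fun k _ => by positivity)
    (hX.sum_rpow_norm_birkhoffMean_le T J u)

end UniformConvexity

namespace DH

/-- `g` is a product of `n` letters from `{a, b, a⁻¹, b⁻¹}`; `wordLen g` is the least such `n`. -/
def IsWord (g : DH) (n : ℕ) : Prop :=
  ∃ l : List DH, l.length = n ∧ (∀ s ∈ l, s ∈ ({gA, gB, gA⁻¹, gB⁻¹} : Set DH)) ∧ l.prod = g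

lemma IsWord.wordLen_le {g : DH} {n : ℕ} (h : IsWord g n) : wordLen g ≤ n := Nat.sInf_le h

lemma isWord_one : IsWord 1 0 := ⟨[], rfl, by simp, rfl⟩

lemma isWord_letter {s : DH} (hs : s ∈ ({gA, gB, gA⁻¹, gB⁻¹} : Set DH)) : IsWord s 1 :=
  ⟨[s], rfl, by simpa using hs, by simp⟩

lemma isWord_gA : IsWord gA 1 := isWord_letter (by simp)

lemma isWord_gB : IsWord gB 1 := isWord_letter (by simp)

lemma IsWord.mul {g h : DH} {m n : ℕ} (hg : IsWord g m) (hh : IsWord h n) :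
    IsWord (g * h) (m + n) := by
  obtain ⟨l, rfl, hl, rfl⟩ := hg
  obtain ⟨k, rfl, hk, rfl⟩ := hh
  exact ⟨l ++ k, List.length_append, fun s hs => (List.mem_append.1 hs).elim (hl s) (hk s),
    List.prod_append⟩

lemma IsWord.inv {g : DH} {m : ℕ} (hg : IsWord g m) : IsWord g⁻¹ m := by
  obtain ⟨l, rfl, hl, rfl⟩ := hg
  refine ⟨(l.map (·⁻¹)).reverse, by simp, fun s hs => ?_, (List.prod_inv_reverse l).symm⟩
  obtain ⟨t, ht, rfl⟩ := List.mem_map.1 (List.mem_reverse.1 hs)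
  rcases hl t ht with rfl | rfl | rfl | rfl <;> simp

lemma IsWord.pow {g : DH} {m : ℕ} (hg : IsWord g m) (r : ℕ) : IsWord (g ^ r) (r * m) := by
  induction r with
  | zero => simpa using isWord_one
  | succ r ih => rw [pow_succ, Nat.succ_mul]; exact ih.mul hg

lemma IsWord.zpow {g : DH} {r : ℤ} {m : ℕ} (h : IsWord (g ^ r.natAbs) m) : IsWord (g ^ r) m := by
  rcases Int.natAbs_eq r with hr | hr <;> rw [hr]
  · rwa [zpow_natCast]
  · rw [zpow_neg, zpow_natCast]
    exact h.inv

lemma gA_zpow (r : ℤ) : gA ^ r = ⟨r, 0, 0⟩ := by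
  induction r using Int.induction_on with
  | zero => rfl
  | succ n ih => rw [zpow_add_one, ih]; simp [mul_def, gA]
  | pred n ih => rw [zpow_sub_one, ih]; simp [mul_def, inv_def, gA, sub_eq_add_neg]

lemma gB_zpow (r : ℤ) : gB ^ r = ⟨0, r, 0⟩ := by
  induction r using Int.induction_on with
  | zero => rfl
  | succ n ih => rw [zpow_add_one, ih]; simp [mul_def, gB]
  | pred n ih => rw [zpow_sub_one, ih]; simp [mul_def, inv_def, gB, sub_eq_add_neg]

lemma gC_eq : gC = ⟨0, 0, 1⟩ := by simp [gC, mul_def, gA, gB, inv_def]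

lemma gC_zpow (r : ℤ) : gC ^ r = ⟨0, 0, r⟩ := by
  induction r using Int.induction_on with
  | zero => rfl
  | succ n ih => rw [zpow_add_one, ih]; simp [mul_def, gC_eq]
  | pred n ih => rw [zpow_sub_one, ih]; simp [mul_def, inv_def, gC_eq, sub_eq_add_neg]

lemma gC_pow (r : ℕ) : gC ^ r = ⟨0, 0, r⟩ := by rw [← zpow_natCast, gC_zpow]

lemma commute_gC (g : DH) : Commute g gC := by
  ext <;> simp [mul_def, gC_eq, add_comm]

lemma eq_gB_zpow_mul_gA_zpow_mul_gC_zpow (g : DH) : g = gB ^ g.y * gA ^ g.x * gC ^ g.z := by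
  rw [gA_zpow, gB_zpow, gC_zpow]
  ext <;> simp [mul_def]

/-- `c ^ (r ^ 2)` is the commutator of `a ^ r` and `b ^ r`. -/
lemma isWord_gC_pow_sq (r : ℕ) : IsWord (gC ^ r ^ 2) (4 * r) := by
  have h : gC ^ r ^ 2 = gA ^ r * gB ^ r * (gA ^ r)⁻¹ * (gB ^ r)⁻¹ := by
    rw [gC_pow, ← zpow_natCast gA, ← zpow_natCast gB, gA_zpow, gB_zpow]
    simp [mul_def, inv_def, pow_two]
  have hA := isWord_gA.pow r
  have hB := isWord_gB.pow r
  rw [h, show 4 * r = r * 1 + r * 1 + r * 1 + r * 1 by ring]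
  exact ((hA.mul hB).mul hA.inv).mul hB.inv

lemma exists_isWord_gC_pow (m : ℕ) : ∃ k ≤ 16 * m.sqrt, IsWord (gC ^ m) k := by
  obtain ⟨a, b, c, d, h⟩ := Nat.sum_four_squares m
  refine ⟨4 * a + 4 * b + 4 * c + 4 * d, ?_, ?_⟩
  · have ha : a ≤ m.sqrt := Nat.le_sqrt'.2 (by omega)
    have hb : b ≤ m.sqrt := Nat.le_sqrt'.2 (by omega)
    have hc : c ≤ m.sqrt := Nat.le_sqrt'.2 (by omega)
    have hd : d ≤ m.sqrt := Nat.le_sqrt'.2 (by omega)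
    omega
  · rw [← h, pow_add, pow_add, pow_add]
    exact (((isWord_gC_pow_sq a).mul (isWord_gC_pow_sq b)).mul (isWord_gC_pow_sq c)).mul
      (isWord_gC_pow_sq d)

lemma exists_isWord (g : DH) :
    ∃ k ≤ g.y.natAbs + g.x.natAbs + 16 * g.z.natAbs.sqrt, IsWord g k := by
  obtain ⟨k, hkz, hk⟩ := exists_isWord_gC_pow g.z.natAbs
  have hy : IsWord (gB ^ g.y) g.y.natAbs := .zpow (by simpa using isWord_gB.pow g.y.natAbs)
  have hx : IsWord (gA ^ g.x) g.x.natAbs := .zpow (by simpa using isWord_gA.pow g.x.natAbs)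
  refine ⟨_, Nat.add_le_add_left hkz _, ?_⟩
  have hword := (hy.mul hx).mul hk.zpow
  rwa [← eq_gB_zpow_mul_gA_zpow_mul_gC_zpow] at hword

lemma isWord_wordLen (g : DH) : IsWord g (wordLen g) := by
  obtain ⟨k, -, hk⟩ := exists_isWord g
  exact Nat.sInf_mem (s := {n | IsWord g n}) ⟨k, hk⟩

lemma wordLen_le_natAbs (g : DH) :
    wordLen g ≤ g.y.natAbs + g.x.natAbs + 16 * g.z.natAbs.sqrt := by
  obtain ⟨k, hkg, hk⟩ := exists_isWord g
  exact hk.wordLen_le.trans hkg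

lemma wordLen_gC_pow_le (m : ℕ) : wordLen (gC ^ m) ≤ 16 * m.sqrt := by
  simpa [gC_pow] using wordLen_le_natAbs (gC ^ m)

lemma wordLen_mul_le (g h : DH) : wordLen (g * h) ≤ wordLen g + wordLen h :=
  ((isWord_wordLen g).mul (isWord_wordLen h)).wordLen_le

lemma wordLen_inv (g : DH) : wordLen g⁻¹ = wordLen g :=
  le_antisymm (isWord_wordLen g).inv.wordLen_le
    (by simpa using (isWord_wordLen g⁻¹).inv.wordLen_le)

lemma wordLen_le_wordLen_mul_add (g h : DH) : wordLen g ≤ wordLen (g * h) + wordLen h := by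
  simpa [wordLen_inv] using wordLen_mul_le (g * h) h⁻¹

lemma wordLen_one : wordLen 1 = 0 := Nat.le_zero.1 isWord_one.wordLen_le

lemma mem_Ball {g : DH} {n : ℕ} : g ∈ Ball n ↔ wordLen g ≤ n := by
  simp [Ball, dW, wordLen_inv]

lemma dW_mul_right (g h : DH) : dW g (g * h) = wordLen h := by simp [dW]

lemma coord_of_mem_letters {s : DH} (hs : s ∈ ({gA, gB, gA⁻¹, gB⁻¹} : Set DH)) :
    |s.x| ≤ 1 ∧ |s.y| ≤ 1 ∧ s.z = 0 := by
  rcases hs with rfl | rfl | rfl | rfl <;> simp [gA, gB, inv_def]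

lemma IsWord.coord_le {g : DH} {n : ℕ} (h : IsWord g n) :
    |g.x| ≤ n ∧ |g.y| ≤ n ∧ |g.z| ≤ (n : ℤ) ^ 2 := by
  obtain ⟨l, rfl, hl, rfl⟩ := h
  induction l with
  | nil => simp [one_def]
  | cons s l ih =>
    obtain ⟨hx, hy, hz⟩ := ih fun t ht => hl t (List.mem_cons_of_mem _ ht)
    obtain ⟨hsx, hsy, hsz⟩ := coord_of_mem_letters (hl s List.mem_cons_self)
    simp only [List.prod_cons, List.length_cons, mul_def, hsz, zero_add, Nat.cast_add, Nat.cast_one]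
    refine ⟨?_, ?_, ?_⟩
    · linarith [abs_add_le s.x l.prod.x]
    · linarith [abs_add_le s.y l.prod.y]
    · calc |l.prod.z + s.x * l.prod.y| ≤ |l.prod.z| + |s.x| * |l.prod.y| := by
            rw [← abs_mul]; exact abs_add_le _ _
        _ ≤ (l.length : ℤ) ^ 2 + 1 * l.length := by gcongr
        _ ≤ ((l.length : ℤ) + 1) ^ 2 := by nlinarith

lemma le_sq_wordLen_gC_pow (m : ℕ) : m ≤ wordLen (gC ^ m) ^ 2 := by
  have h := (isWord_wordLen (gC ^ m)).coord_le.2.2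
  generalize wordLen (gC ^ m) = k at h ⊢
  rw [gC_pow, Nat.abs_cast] at h
  exact_mod_cast h

end DH

namespace DH

section VerticalVersusHorizontal

variable {E : Type*} [NormedAddCommGroup E] [NormedSpace ℝ E] (ρ : DH →* (E →ₗᵢ[ℝ] E))

/-- The norm of the horizontal gradient of `u`: how far the generators `a` and `b`, acting through
the isometric representation `ρ`, move `u`. -/
noncomputable def horizGrad (u : E) : ℝ := ‖u - ρ gA u‖ + ‖u - ρ gB u‖

lemma norm_sub_inv_apply (g : DH) (u : E) : ‖u - ρ g⁻¹ u‖ = ‖u - ρ g u‖ := by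
  rw [← (ρ g).norm_map, map_sub, ← Function.comp_apply (f := ρ g), ← LinearIsometry.coe_mul,
    ← map_mul, mul_inv_cancel, map_one, LinearIsometry.coe_one, id_eq, norm_sub_rev]

lemma norm_sub_letter_apply_le {s : DH} (hs : s ∈ ({gA, gB, gA⁻¹, gB⁻¹} : Set DH)) (u : E) :
    ‖u - ρ s u‖ ≤ horizGrad ρ u := by
  have hA : ‖u - ρ gA u‖ ≤ horizGrad ρ u := le_add_of_nonneg_right (norm_nonneg _)
  have hB : ‖u - ρ gB u‖ ≤ horizGrad ρ u := le_add_of_nonneg_left (norm_nonneg _)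
  rcases hs with rfl | rfl | rfl | rfl
  exacts [hA, hB, (norm_sub_inv_apply ρ gA u).trans_le hA, (norm_sub_inv_apply ρ gB u).trans_le hB]

lemma norm_sub_apply_le (g : DH) (u : E) : ‖u - ρ g u‖ ≤ wordLen g * horizGrad ρ u := by
  obtain ⟨l, hlen, hl, hg⟩ := isWord_wordLen g
  rw [← hlen, ← nsmul_eq_mul, ← hg, map_list_prod, ← List.length_map (f := ρ),
    ← List.length_map (f := fun T : E →ₗᵢ[ℝ] E => ‖u - T u‖)]
  refine (norm_sub_list_prod_le _ u).trans (List.sum_le_card_nsmul _ _ fun t ht => ?_)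
  simp only [List.mem_map, exists_exists_and_eq_and] at ht
  obtain ⟨s, hs, rfl⟩ := ht
  exact norm_sub_letter_apply_le ρ (hl s hs) u

lemma norm_sub_gC_pow_le (m : ℕ) (u : E) :
    ‖u - (ρ gC ^ 2 ^ m) u‖ ≤ 16 * √2 ^ m * horizGrad ρ u := by
  have hlen : (wordLen (gC ^ 2 ^ m) : ℝ) ≤ 16 * √2 ^ m := by
    calc (wordLen (gC ^ 2 ^ m) : ℝ) ≤ 16 * ((2 ^ m).sqrt : ℝ) := by
          exact_mod_cast wordLen_gC_pow_le (2 ^ m)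
      _ ≤ 16 * √((2 ^ m : ℕ) : ℝ) := by gcongr; exact Real.nat_sqrt_le_real_sqrt
      _ = 16 * √2 ^ m := by rw [Nat.cast_pow, Nat.cast_two, sqrt_two_pow]
  rw [← map_pow]
  refine (norm_sub_apply_le ρ _ u).trans ?_
  gcongr
  exact add_nonneg (norm_nonneg _) (norm_nonneg _)

lemma horizGrad_birkhoffMean_sub (n : ℕ) (F : E) :
    horizGrad ρ (birkhoffMean (ρ gC) n (F - (ρ gC ^ n) F)) =
      ‖birkhoffMean (ρ gC) n ((F - ρ gA F) - (ρ gC ^ n) (F - ρ gA F))‖ +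
        ‖birkhoffMean (ρ gC) n ((F - ρ gB F) - (ρ gC ^ n) (F - ρ gB F))‖ := by
  have h (s : DH) : birkhoffMean (ρ gC) n (F - (ρ gC ^ n) F)
      - ρ s (birkhoffMean (ρ gC) n (F - (ρ gC ^ n) F))
      = birkhoffMean (ρ gC) n ((F - ρ s F) - (ρ gC ^ n) (F - ρ s F)) := by
    have hcomm : Commute (ρ s) (ρ gC) := (commute_gC s).map ρ
    have hpow : ρ s ((ρ gC ^ n) F) = (ρ gC ^ n) (ρ s F) :=
      DFunLike.congr_fun (hcomm.pow_right n).eq F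
    rw [map_birkhoffMean hcomm, map_sub (ρ s), hpow, ← map_sub, map_sub (ρ gC ^ n)]
    congr 1
    abel
  rw [horizGrad, h, h]

lemma norm_sub_gC_pow_recursion (m : ℕ) (F : E) :
    ‖F - (ρ gC ^ 2 ^ (m + 4)) F‖ ≤ ∑ l ∈ Finset.range m, ‖F - (ρ gC ^ 2 ^ l) F‖ +
      2 ^ 16 * √2 ^ m * horizGrad ρ (birkhoffMean (ρ gC) (2 ^ m) (F - (ρ gC ^ 2 ^ m) F)) +
      ‖F - (ρ gC ^ 2 ^ (m + 8)) F‖ / 16 := by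
  set v := birkhoffMean (ρ gC) (2 ^ m) (F - (ρ gC ^ 2 ^ m) F) with hv
  have hlarge := norm_sub_pow_mul_le (ρ gC) (2 ^ m) (2 ^ 4) F
  have hmean := norm_sub_birkhoffMean_two_pow_le (ρ gC) m F
  have hv_le := norm_birkhoffMean_sub_pow_le (ρ gC) (2 ^ m) (by norm_num : 0 < 2 ^ 8) F hv
  have hvert := norm_sub_gC_pow_le ρ m v
  rw [← pow_add, ← hv] at hlarge
  rw [← pow_add] at hv_le
  push_cast at hlarge hv_le
  linarith

lemma sum_horizGrad_birkhoffMean_le {c q : ℝ} (hE : TwoPointConvex E c q) (hc : 0 < c)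
    (hq : 1 ≤ q) (J : ℕ) (F : E) :
    ∑ m ∈ Finset.range J,
        horizGrad ρ (birkhoffMean (ρ gC) (2 ^ m) (F - (ρ gC ^ 2 ^ m) F)) ≤
      (J : ℝ) ^ (1 - 1 / q) * horizGrad ρ F / c := by
  simp only [horizGrad_birkhoffMean_sub, Finset.sum_add_distrib]
  rw [horizGrad, mul_add, add_div]
  exact add_le_add (hE.sum_norm_birkhoffMean_le hc hq (ρ gC) J _)
    (hE.sum_norm_birkhoffMean_le hc hq (ρ gC) J _)

/-- A vertical-versus-horizontal Poincaré inequality: for `f : ℍ → X` and the right regular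
representation on `ℓ^q(ℍ; X)` it compares increments of `f` along the centre with its gradient. -/
theorem sum_norm_sub_gC_pow_div_le {c q : ℝ} (hE : TwoPointConvex E c q) (hc : 0 < c)
    (hq : 1 ≤ q) (J : ℕ) (F : E) :
    ∑ m ∈ Finset.range J, ‖F - (ρ gC ^ 2 ^ m) F‖ / √2 ^ m ≤
      (768 + 2 ^ 17 * (J : ℝ) ^ (1 - 1 / q) / c) * horizGrad ρ F := by
  have hscales := sum_div_sqrt_two_pow_le_of_recursion (M := 16 * horizGrad ρ F)
    (fun m => norm_nonneg (F - (ρ gC ^ 2 ^ m) F))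
    (fun m => (norm_sub_gC_pow_le ρ m F).trans_eq (by ring))
    (fun m => norm_sub_gC_pow_recursion ρ m F) J
  have hcancel (m : ℕ) (t : ℝ) : 2 ^ 16 * √2 ^ m * t / √2 ^ m = 2 ^ 16 * t := by field_simp
  simp only [hcancel, ← Finset.mul_sum] at hscales
  have hgrad := sum_horizGrad_birkhoffMean_le ρ hE hc hq J F
  calc _ ≤ _ := hscales
    _ ≤ 48 * (16 * horizGrad ρ F)
          + 2 * (2 ^ 16 * ((J : ℝ) ^ (1 - 1 / q) * horizGrad ρ F / c)) := by gcongr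
    _ = _ := by ring

theorem rpow_mul_le_horizGrad {c q : ℝ} (hE : TwoPointConvex E c q) (hc : 0 < c) (hq : 1 ≤ q)
    {J : ℕ} (hJ : 0 < J) {L : ℝ} {F : E}
    (hF : ∀ m < J, L * √2 ^ m ≤ ‖F - (ρ gC ^ 2 ^ m) F‖) :
    (J : ℝ) ^ (1 / q) * L ≤ (768 + 2 ^ 17 / c) * horizGrad ρ F := by
  have hJ1 : (1 : ℝ) ≤ J := by exact_mod_cast hJ
  have hgrad : 0 ≤ horizGrad ρ F := add_nonneg (norm_nonneg _) (norm_nonneg _)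
  have hpow : 1 ≤ (J : ℝ) ^ (1 - 1 / q) :=
    Real.one_le_rpow hJ1 (sub_nonneg.2 (div_le_one_of_le₀ hq (by linarith)))
  have hsplit : (J : ℝ) = (J : ℝ) ^ (1 - 1 / q) * (J : ℝ) ^ (1 / q) := by
    rw [← Real.rpow_add (by linarith), sub_add_cancel, Real.rpow_one]
  have hlower : J * L ≤ ∑ m ∈ Finset.range J, ‖F - (ρ gC ^ 2 ^ m) F‖ / √2 ^ m := by
    calc J * L = (Finset.range J).card • L := by rw [Finset.card_range, nsmul_eq_mul]
      _ ≤ _ := Finset.card_nsmul_le_sum _ _ L fun m hm =>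
          (le_div_iff₀ (by positivity)).2 (hF m (Finset.mem_range.1 hm))
  refine le_of_mul_le_mul_left ?_ (zero_lt_one.trans_le hpow)
  calc (J : ℝ) ^ (1 - 1 / q) * ((J : ℝ) ^ (1 / q) * L) = J * L := by rw [← mul_assoc, ← hsplit]
    _ ≤ (768 * 1 + 2 ^ 17 * (J : ℝ) ^ (1 - 1 / q) / c) * horizGrad ρ F := by
        simpa using hlower.trans (sum_norm_sub_gC_pow_div_le ρ hE hc hq J F)
    _ ≤ (768 * (J : ℝ) ^ (1 - 1 / q) + 2 ^ 17 * (J : ℝ) ^ (1 - 1 / q) / c) * horizGrad ρ F := by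
        gcongr
    _ = _ := by ring

end VerticalVersusHorizontal

end DH

section Lp

variable {X : Type*} [NormedAddCommGroup X] {p : ENNReal}

lemma memℓp_comp_mul_right {G : Type*} [Group G] (hp : 0 < p.toReal) {f : G → X}
    (hf : Memℓp f p) (g : G) :
    Memℓp (fun x => f (x * g)) p := by
  rw [memℓp_gen_iff hp] at hf ⊢
  exact (Equiv.mulRight g).summable_iff.2 hf

variable [Fact (1 ≤ p)]

lemma norm_le_card_rpow_mul_of_support {ι : Type*} (hp : 0 < p.toReal) {u : lp (fun _ : ι => X) p}
    {s : Finset ι} (hs : ∀ i ∉ s, u i = 0) {c : ℝ} (hc : 0 ≤ c) (hu : ∀ i, ‖u i‖ ≤ c) :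
    ‖u‖ ≤ (s.card : ℝ) ^ (1 / p.toReal) * c := by
  refine (Real.rpow_le_rpow_iff (norm_nonneg u) (by positivity) hp).1 ?_
  rw [Real.mul_rpow (by positivity) hc, ← Real.rpow_mul (by positivity),
    one_div_mul_cancel hp.ne', Real.rpow_one, lp.norm_rpow_eq_tsum hp, ← nsmul_eq_mul,
    tsum_eq_sum (s := s) fun i hi => by rw [hs i hi, norm_zero, Real.zero_rpow hp.ne']]
  exact Finset.sum_le_card_nsmul _ _ _ fun i _ => Real.rpow_le_rpow (norm_nonneg _) (hu i) hp.le

lemma card_rpow_mul_le_norm {ι : Type*} (hp : 0 < p.toReal) {u : lp (fun _ : ι => X) p}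
    {s : Finset ι} {c : ℝ} (hc : 0 ≤ c) (hu : ∀ i ∈ s, c ≤ ‖u i‖) :
    (s.card : ℝ) ^ (1 / p.toReal) * c ≤ ‖u‖ := by
  refine (Real.rpow_le_rpow_iff (by positivity) (norm_nonneg u) hp).1 ?_
  rw [Real.mul_rpow (by positivity) hc, ← Real.rpow_mul (by positivity),
    one_div_mul_cancel hp.ne', Real.rpow_one, ← nsmul_eq_mul]
  exact (Finset.card_nsmul_le_sum _ _ _ fun i hi => Real.rpow_le_rpow hc (hu i hi) hp.le).trans
    (lp.sum_rpow_le_norm_rpow hp u s)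

lemma TwoPointConvex.lp {ι : Type*} {c : ℝ} (hX : TwoPointConvex X c p.toReal) (hc : 0 ≤ c)
    (hp : 0 < p.toReal) : TwoPointConvex (lp (fun _ : ι => X) p) c p.toReal := by
  intro u v
  have hsum {k : ℝ} (hk : 0 ≤ k) (w : _root_.lp (fun _ : ι => X) p) :
      HasSum (fun i => (k * ‖w i‖) ^ p.toReal) ((k * ‖w‖) ^ p.toReal) := by
    simp only [Real.mul_rpow hk (norm_nonneg _)]
    exact (lp.hasSum_norm hp w).mul_left _
  have hmid : HasSum (fun i => (‖u i + v i‖ / 2) ^ p.toReal) ((‖u + v‖ / 2) ^ p.toReal) := by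
    simpa [div_eq_inv_mul] using hsum (k := 2⁻¹) (by norm_num) (u + v)
  exact hasSum_le (fun i => hX (u i) (v i)) (hmid.add (hsum hc (u - v)))
    (((lp.hasSum_norm hp u).add (lp.hasSum_norm hp v)).div_const 2)

/-- The right regular representation `(g • F) x = F (x * g)` of `G` on `ℓᵖ(G; X)`. -/
noncomputable def rightRegular (G X : Type*) [Group G] [NormedAddCommGroup X] [NormedSpace ℝ X]
    {p : ENNReal} [Fact (1 ≤ p)] (hp : 0 < p.toReal) :
    G →* (lp (fun _ : G => X) p →ₗᵢ[ℝ] lp (fun _ : G => X) p) where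
  toFun g :=
    { toFun := fun F => ⟨fun x => F (x * g), memℓp_comp_mul_right hp (lp.memℓp F) g⟩
      map_add' := fun _ _ => rfl
      map_smul' := fun _ _ => rfl
      norm_map' := fun F => by
        rw [lp.norm_eq_tsum_rpow hp, lp.norm_eq_tsum_rpow hp]
        congr 1
        exact (Equiv.mulRight g).tsum_eq fun x => ‖F x‖ ^ p.toReal }
  map_one' := by
    ext F x
    exact congrArg F (mul_one x)
  map_mul' g h := by
    ext F x
    exact congrArg F (mul_assoc x g h).symm

end Lp

namespace DH

/-- The box of elements with horizontal coordinates at most `R` and vertical coordinate at most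
`R ^ 2` in absolute value; it is comparable to the ball of radius `R`, with an explicit
cardinality. -/
noncomputable def coordBox (R : ℕ) : Finset DH :=
  (Finset.Icc (-R : ℤ) R ×ˢ Finset.Icc (-R : ℤ) R ×ˢ Finset.Icc (-(R : ℤ) ^ 2) (R ^ 2)).map
    ⟨fun t => ⟨t.1, t.2.1, t.2.2⟩, fun s t h => by
      simp only [mk.injEq] at h
      exact Prod.ext h.1 (Prod.ext h.2.1 h.2.2)⟩

lemma mem_coordBox {R : ℕ} {g : DH} :
    g ∈ coordBox R ↔ |g.x| ≤ R ∧ |g.y| ≤ R ∧ |g.z| ≤ (R : ℤ) ^ 2 := by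
  simp only [coordBox, Finset.mem_map, Finset.mem_product, Finset.mem_Icc, abs_le]
  constructor
  · rintro ⟨t, h, rfl⟩
    exact h
  · intro h
    exact ⟨(g.x, g.y, g.z), h, rfl⟩

lemma card_coordBox (R : ℕ) : (coordBox R).card = (2 * R + 1) ^ 2 * (2 * R ^ 2 + 1) := by
  have hIcc (k : ℕ) : (Finset.Icc (-k : ℤ) k).card = 2 * k + 1 := by
    rw [Int.card_Icc]; omega
  have hIcc_sq := hIcc (R ^ 2)
  push_cast at hIcc_sq
  rw [coordBox, Finset.card_map, Finset.card_product, Finset.card_product, hIcc, hIcc_sq]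
  ring

lemma card_coordBox_mul_le {k : ℕ} (hk : 1 ≤ k) (R : ℕ) :
    (coordBox (k * R)).card ≤ k ^ 4 * (coordBox R).card := by
  have hlinear : 2 * (k * R) + 1 ≤ k * (2 * R + 1) := by nlinarith
  have hsquare : 2 * (k * R) ^ 2 + 1 ≤ k ^ 2 * (2 * R ^ 2 + 1) := by nlinarith
  rw [card_coordBox, card_coordBox]
  calc (2 * (k * R) + 1) ^ 2 * (2 * (k * R) ^ 2 + 1)
      ≤ (k * (2 * R + 1)) ^ 2 * (k ^ 2 * (2 * R ^ 2 + 1)) := by gcongr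
    _ = _ := by ring

lemma mem_coordBox_of_wordLen_le {R : ℕ} {g : DH} (h : wordLen g ≤ R) : g ∈ coordBox R := by
  have h' : (wordLen g : ℤ) ≤ R := by exact_mod_cast h
  obtain ⟨hx, hy, hz⟩ := (isWord_wordLen g).coord_le
  exact mem_coordBox.2 ⟨hx.trans h', hy.trans h', hz.trans (by gcongr)⟩

lemma wordLen_le_of_mem_coordBox {R : ℕ} {g : DH} (h : g ∈ coordBox R) :
    wordLen g ≤ 18 * R := by
  obtain ⟨hx, hy, hz⟩ := mem_coordBox.1 h
  have hsqrt : g.z.natAbs.sqrt ≤ R := by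
    rw [← Nat.sqrt_eq' R]
    exact Nat.sqrt_le_sqrt (by zify; exact hz)
  have hx' : g.x.natAbs ≤ R := by zify; exact hx
  have hy' : g.y.natAbs ≤ R := by zify; exact hy
  have hlen := wordLen_le_natAbs g
  omega

variable {X : Type*} [NormedAddCommGroup X] [NormedSpace ℝ X]

/-- The function equal to `1` on `[0, N]`, to `0` on `[2N, ∞)`, and affine in between. -/
noncomputable def cutoff (N k : ℕ) : ℝ := max 0 (min 1 (2 - k / N))

lemma cutoff_nonneg (N k : ℕ) : 0 ≤ cutoff N k := le_max_left _ _

lemma cutoff_le_one (N k : ℕ) : cutoff N k ≤ 1 := max_le zero_le_one (min_le_left _ _)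

lemma cutoff_eq_one {N k : ℕ} (hN : 0 < N) (h : k ≤ N) : cutoff N k = 1 := by
  have h' : (k : ℝ) / N ≤ 1 := (div_le_one (by exact_mod_cast hN)).2 (by exact_mod_cast h)
  rw [cutoff, min_eq_left (by linarith), max_eq_right zero_le_one]

lemma cutoff_eq_zero {N k : ℕ} (hN : 0 < N) (h : 2 * N ≤ k) : cutoff N k = 0 := by
  have h' : (2 : ℝ) ≤ k / N := (le_div_iff₀ (by exact_mod_cast hN)).2 (by exact_mod_cast h)
  exact max_eq_left ((min_le_right _ _).trans (by linarith))

lemma abs_cutoff_sub_le (N k l : ℕ) : |cutoff N k - cutoff N l| ≤ |(k : ℝ) - l| / N := by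
  refine (abs_max_sub_max_le_max _ _ _ _).trans ?_
  rw [sub_self, abs_zero, max_eq_right (abs_nonneg _)]
  refine (abs_min_sub_min_le_max _ _ _ _).trans_eq ?_
  rw [sub_self, abs_zero, max_eq_right (abs_nonneg _), sub_sub_sub_cancel_left, ← sub_div, abs_div,
    abs_sub_comm, Nat.abs_cast]

/-- A map on the Heisenberg group, centred at the identity and cut off at radius `2N`: it is
finitely supported and has the increments of `f` on the ball of radius `N`. -/
noncomputable def cutoffMap (N : ℕ) (f : DH → X) (p : DH) : X :=
  cutoff N (wordLen p) • (f p - f 1)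

lemma cutoffMap_eq_zero {N : ℕ} (hN : 0 < N) (f : DH → X) {p : DH} (hp : 2 * N ≤ wordLen p) :
    cutoffMap N f p = 0 := by
  rw [cutoffMap, cutoff_eq_zero hN hp, zero_smul]

lemma cutoffMap_sub_eq_zero {N : ℕ} (hN : 0 < N) (f : DH → X) {p s : DH} (hs : wordLen s ≤ 1)
    (hp : 2 * N < wordLen p) : cutoffMap N f p - cutoffMap N f (p * s) = 0 := by
  have h := wordLen_le_wordLen_mul_add p s
  rw [cutoffMap_eq_zero hN f hp.le, cutoffMap_eq_zero hN f (by omega), sub_zero]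

lemma cutoffMap_sub_eq_sub {N : ℕ} (hN : 0 < N) (f : DH → X) {p g : DH} (hp : wordLen p ≤ N)
    (hpg : wordLen (p * g) ≤ N) : cutoffMap N f p - cutoffMap N f (p * g) = f p - f (p * g) := by
  rw [cutoffMap, cutoffMap, cutoff_eq_one hN hp, cutoff_eq_one hN hpg, one_smul, one_smul,
    sub_sub_sub_cancel_right]

lemma abs_cutoff_wordLen_sub_le (N : ℕ) {s : DH} (hs : wordLen s ≤ 1) (p : DH) :
    |cutoff N (wordLen p) - cutoff N (wordLen (p * s))| ≤ 1 / N := by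
  refine (abs_cutoff_sub_le N _ _).trans ?_
  gcongr
  have hp : (wordLen p : ℝ) ≤ wordLen (p * s) + 1 := by
    exact_mod_cast (wordLen_le_wordLen_mul_add p s).trans (by omega)
  have hps : (wordLen (p * s) : ℝ) ≤ wordLen p + 1 := by
    exact_mod_cast (wordLen_mul_le p s).trans (by omega)
  rw [abs_le]
  constructor <;> linarith

lemma norm_cutoffMap_sub_le {N n : ℕ} (hN : 0 < N) (hn : 2 * N + 1 ≤ n) {D : ℝ} (hD : 0 ≤ D)
    {f : DH → X} (hf : ∀ x ∈ Ball n, ∀ y ∈ Ball n, ‖f x - f y‖ ≤ D * (dW x y : ℝ))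
    {s : DH} (hs : wordLen s ≤ 1) (p : DH) :
    ‖cutoffMap N f p - cutoffMap N f (p * s)‖ ≤ 4 * D := by
  rcases lt_or_ge (2 * N) (wordLen p) with hp | hp
  · rw [cutoffMap_sub_eq_zero hN f hs hp, norm_zero]
    positivity
  have hps : wordLen (p * s) ≤ 2 * N + 1 := (wordLen_mul_le p s).trans (by omega)
  have hp_mem : p ∈ Ball n := mem_Ball.2 (by omega)
  have hps_mem : p * s ∈ Ball n := mem_Ball.2 (by omega)
  have hone_mem : (1 : DH) ∈ Ball n := mem_Ball.2 (by rw [wordLen_one]; omega)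
  have hstep : ‖f p - f (p * s)‖ ≤ D := by
    refine (hf p hp_mem _ hps_mem).trans (mul_le_of_le_one_right hD ?_)
    rw [dW_mul_right]
    exact_mod_cast hs
  have hcentre : ‖f (p * s) - f 1‖ ≤ D * (2 * N + 1) := by
    refine (hf _ hps_mem 1 hone_mem).trans (mul_le_mul_of_nonneg_left ?_ hD)
    rw [dW, mul_one, wordLen_inv]
    exact_mod_cast hps
  have hleibniz : cutoffMap N f p - cutoffMap N f (p * s)
      = cutoff N (wordLen p) • (f p - f (p * s))
        + (cutoff N (wordLen p) - cutoff N (wordLen (p * s))) • (f (p * s) - f 1) := by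
    simp only [cutoffMap]; module
  have hN1 : (1 : ℝ) ≤ N := by exact_mod_cast hN
  calc ‖cutoffMap N f p - cutoffMap N f (p * s)‖
      ≤ cutoff N (wordLen p) * ‖f p - f (p * s)‖
        + |cutoff N (wordLen p) - cutoff N (wordLen (p * s))| * ‖f (p * s) - f 1‖ := by
        rw [hleibniz, ← Real.norm_of_nonneg (cutoff_nonneg N (wordLen p)), ← Real.norm_eq_abs,
          ← norm_smul, ← norm_smul, Real.norm_of_nonneg (cutoff_nonneg N (wordLen p))]
        exact norm_add_le _ _
    _ ≤ 1 * D + 1 / N * (D * (2 * N + 1)) := by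
        gcongr
        exacts [cutoff_le_one _ _, abs_cutoff_wordLen_sub_le N hs p]
    _ = 3 * D + D / N := by field_simp; ring
    _ ≤ 4 * D := by linarith [div_le_self hD hN1]

section CutoffLp

variable {p : ENNReal}

lemma memℓp_cutoffMap {N : ℕ} (hN : 0 < N) (hp : 0 < p.toReal) (f : DH → X) :
    Memℓp (cutoffMap N f) p := by
  refine memℓp_gen (summable_of_ne_finset_zero (s := coordBox (2 * N)) fun g hg => ?_)
  have hlen : 2 * N < wordLen g := lt_of_not_ge fun h => hg (mem_coordBox_of_wordLen_le h)
  rw [cutoffMap_eq_zero hN f hlen.le, norm_zero, Real.zero_rpow hp.ne']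

variable [Fact (1 ≤ p)]

/-- `cutoffMap N f` as an element of `ℓᵖ(ℍ; X)`. -/
noncomputable def cutoffLp {N : ℕ} (hN : 0 < N) (hp : 0 < p.toReal) (f : DH → X) :
    lp (fun _ : DH => X) p :=
  ⟨cutoffMap N f, memℓp_cutoffMap hN hp f⟩

lemma cutoffLp_sub_rightRegular_apply {N : ℕ} (hN : 0 < N) (hp : 0 < p.toReal) (f : DH → X)
    (g x : DH) :
    (cutoffLp hN hp f - rightRegular DH X hp g (cutoffLp hN hp f)) x =
      cutoffMap N f x - cutoffMap N f (x * g) := rfl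

lemma norm_cutoffLp_sub_rightRegular_le {N n : ℕ} (hN : 0 < N) (hn : 2 * N + 1 ≤ n)
    (hp : 0 < p.toReal) {D : ℝ} (hD : 0 ≤ D) {f : DH → X}
    (hf : ∀ x ∈ Ball n, ∀ y ∈ Ball n, ‖f x - f y‖ ≤ D * (dW x y : ℝ)) {s : DH}
    (hs : wordLen s ≤ 1) :
    ‖cutoffLp hN hp f - rightRegular DH X hp s (cutoffLp hN hp f)‖ ≤
      ((coordBox (2 * N)).card : ℝ) ^ (1 / p.toReal) * (4 * D) :=
  norm_le_card_rpow_mul_of_support hp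
    (fun _ hx => cutoffMap_sub_eq_zero hN f hs
      (lt_of_not_ge fun h => hx (mem_coordBox_of_wordLen_le h)))
    (by positivity) (norm_cutoffMap_sub_le hN hn hD hf hs)

lemma le_norm_cutoffLp_sub_rightRegular {N n R : ℕ} (hN : 0 < N) (hn : N ≤ n)
    (hp : 0 < p.toReal) {f : DH → X}
    (hf : ∀ x ∈ Ball n, ∀ y ∈ Ball n, (dW x y : ℝ) ≤ ‖f x - f y‖) {g : DH}
    (hg : 18 * R + wordLen g ≤ N) :
    ((coordBox R).card : ℝ) ^ (1 / p.toReal) * wordLen g ≤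
      ‖cutoffLp hN hp f - rightRegular DH X hp g (cutoffLp hN hp f)‖ := by
  refine card_rpow_mul_le_norm hp (Nat.cast_nonneg _) fun x hx => ?_
  have hxR := wordLen_le_of_mem_coordBox hx
  have hxg := wordLen_mul_le x g
  rw [cutoffLp_sub_rightRegular_apply, cutoffMap_sub_eq_sub hN f (by omega) (by omega),
    ← dW_mul_right x g]
  exact hf x (mem_Ball.2 (by omega)) _ (mem_Ball.2 (by omega))

end CutoffLp

lemma sqrt_two_pow_le_wordLen (j : ℕ) : √2 ^ j ≤ wordLen (gC ^ 2 ^ j) := by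
  rw [← sqrt_two_pow, Real.sqrt_le_left (by positivity)]
  exact_mod_cast le_sq_wordLen_gC_pow (2 ^ j)

lemma wordLen_gC_pow_two_pow_le {j J : ℕ} (hj : j ≤ J) : wordLen (gC ^ 2 ^ j) ≤ 16 * 2 ^ J :=
  (wordLen_gC_pow_le _).trans (Nat.mul_le_mul_left _
    ((Nat.sqrt_le_self _).trans (Nat.pow_le_pow_right two_pos hj)))

theorem rpow_le_mul_of_twoPointConvex {c q : ℝ} (hX : TwoPointConvex X c q) (hc : 0 < c)
    (hq : 1 ≤ q) {J n : ℕ} (hJ : 0 < J) (hn : 68 * 2 ^ J + 1 ≤ n) {D : ℝ} (hD : 0 ≤ D)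
    {f : DH → X} (hf : ∀ x ∈ Ball n, ∀ y ∈ Ball n,
      (dW x y : ℝ) ≤ ‖f x - f y‖ ∧ ‖f x - f y‖ ≤ D * (dW x y : ℝ)) :
    (J : ℝ) ^ (1 / q) ≤ (768 + 2 ^ 17 / c) * (8 * 68 ^ 4) * D := by
  have hq0 : 0 < q := zero_lt_one.trans_le hq
  obtain ⟨p, hp1, rfl⟩ : ∃ p : ENNReal, 1 ≤ p ∧ p.toReal = q :=
    ⟨ENNReal.ofReal q, ENNReal.one_le_ofReal.2 hq, ENNReal.toReal_ofReal hq0.le⟩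
  have : Fact (1 ≤ p) := ⟨hp1⟩
  have hN : 0 < 34 * 2 ^ J := by positivity
  set F := cutoffLp hN hq0 f
  set b : ℝ := ((coordBox (2 ^ J)).card : ℝ) ^ (1 / p.toReal)
  have hb : 0 < b := Real.rpow_pos_of_pos (by rw [card_coordBox]; positivity) _
  have hcard : ((coordBox (2 * (34 * 2 ^ J))).card : ℝ) ^ (1 / p.toReal) ≤ 68 ^ 4 * b := by
    rw [← mul_assoc]
    exact rpow_le_mul_rpow_of_le_mul (by norm_num) (by positivity) (div_le_one_of_le₀ hq hq0.le)
      (by positivity) (by positivity)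
      (by exact_mod_cast card_coordBox_mul_le (by norm_num : 1 ≤ 68) (2 ^ J))
  have hgrad : horizGrad (rightRegular DH X hq0) F ≤ 8 * 68 ^ 4 * D * b := by
    have hletter {s : DH} (hs : IsWord s 1) :=
      norm_cutoffLp_sub_rightRegular_le hN (by omega) hq0 hD (fun x hx y hy => (hf x hx y hy).2)
        hs.wordLen_le
    calc horizGrad (rightRegular DH X hq0) F ≤ 68 ^ 4 * b * (4 * D) + 68 ^ 4 * b * (4 * D) :=
          add_le_add ((hletter isWord_gA).trans (by gcongr)) ((hletter isWord_gB).trans (by gcongr))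
      _ = 8 * 68 ^ 4 * D * b := by ring
  have hvert : ∀ j < J, b * √2 ^ j ≤ ‖F - (rightRegular DH X hq0 gC ^ 2 ^ j) F‖ := fun j hj => by
    have hlen := wordLen_gC_pow_two_pow_le hj.le
    rw [← map_pow]
    exact (mul_le_mul_of_nonneg_left (sqrt_two_pow_le_wordLen j) hb.le).trans
      (le_norm_cutoffLp_sub_rightRegular hN (by omega) hq0 (fun x hx y hy => (hf x hx y hy).1)
        (by omega))
  refine le_of_mul_le_mul_right ?_ hb
  calc (J : ℝ) ^ (1 / p.toReal) * b ≤ (768 + 2 ^ 17 / c) * horizGrad (rightRegular DH X hq0) F :=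
        rpow_mul_le_horizGrad _ (hX.lp hc.le hq0) hc hq hJ hvert
    _ ≤ (768 + 2 ^ 17 / c) * (8 * 68 ^ 4 * D * b) := by gcongr
    _ = _ := by ring

end DH

open DH in
theorem distortion_lower_bound_uniformly_convex_general {η q : ℝ} (hη : 0 < η) (hη1 : η ≤ 1)
    (hq : 2 ≤ q) {X : Type*} [NormedAddCommGroup X] [NormedSpace ℝ X]
    (hX : HasConvexityModulus X η q) {n : ℕ} (hn : 0 < n) {D : ℝ} (hD : 1 ≤ D)
    {f : DH → X} (hf : ∀ x ∈ Ball n, ∀ y ∈ Ball n,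
      (dW x y : ℝ) ≤ ‖f x - f y‖ ∧ ‖f x - f y‖ ≤ D * (dW x y : ℝ)) :
    η / 2 ^ 51 * Real.log n ^ (1 / q) ≤ D := by
  have hq_inv : 1 / q ≤ 1 := div_le_one_of_le₀ (by linarith) (by linarith)
  have hlog0 : 0 ≤ Real.log n := Real.log_natCast_nonneg n
  have hlog := log_le_natLog_two_add_one hn
  rcases le_or_gt (Nat.log 2 n) 7 with hsmall | hlarge
  · have hsmall' : (Nat.log 2 n : ℝ) ≤ 7 := by exact_mod_cast hsmall
    have hroot := rpow_le_mul_rpow_of_le_mul (k := 8) (by norm_num) (by positivity) hq_inv hlog0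
      zero_le_one (by linarith)
    rw [Real.one_rpow] at hroot
    calc η / 2 ^ 51 * Real.log n ^ (1 / q) ≤ 1 / 2 ^ 51 * (8 * 1) := by gcongr
      _ ≤ D := le_trans (by norm_num) hD
  · obtain ⟨J, hJ⟩ := Nat.exists_eq_add_of_lt hlarge
    have hball : 68 * 2 ^ (J + 1) + 1 ≤ n := by
      have hpow := Nat.pow_log_le_self 2 hn.ne'
      rw [hJ, show 7 + J + 1 = J + 1 + 7 by ring, pow_add] at hpow
      have := Nat.one_le_two_pow (n := J + 1)
      omega
    have hlog9 : Real.log n ≤ 9 * (J + 1 : ℕ) := by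
      rw [hJ] at hlog
      push_cast at hlog ⊢
      linarith [(J.cast_nonneg : (0 : ℝ) ≤ J)]
    have hroot := rpow_le_mul_rpow_of_le_mul (by norm_num) (by positivity) hq_inv hlog0
      (Nat.cast_nonneg _) hlog9
    have hdist := rpow_le_mul_of_twoPointConvex (hX.twoPointConvex hη.le hη1 hq) (by positivity)
      (by linarith) J.succ_pos hball (by linarith) hf
    have hconst : η * (768 + 2 ^ 17 / (η / 8)) ≤ 768 + 2 ^ 20 := by
      field_simp
      linarith
    calc η / 2 ^ 51 * Real.log n ^ (1 / q)
        ≤ η / 2 ^ 51 * (9 * ((768 + 2 ^ 17 / (η / 8)) * (8 * 68 ^ 4) * D)) := by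
          gcongr
          exact hroot.trans (by gcongr)
      _ = η * (768 + 2 ^ 17 / (η / 8)) * (9 * (8 * 68 ^ 4) / 2 ^ 51 * D) := by ring
      _ ≤ (768 + 2 ^ 20) * (9 * (8 * 68 ^ 4) / 2 ^ 51 * D) := by gcongr
      _ ≤ D := by linarith

open DH in
/-- Corollary 1.2: sharp nonembeddability of balls in the discrete Heisenberg group
into Banach spaces with modulus of uniform convexity of power type `q`. -/
theorem distortion_lower_bound_uniformly_convex (η : ℝ) (hη : η ∈ Set.Ioo (0 : ℝ) 1)
    (q : ℝ) (hq : 2 ≤ q) :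
    ∃ K : ℝ, 0 < K ∧
      ∀ (X : Type) [NormedAddCommGroup X] [NormedSpace ℝ X] [CompleteSpace X],
        (∀ ε ∈ Set.Ioo (0 : ℝ) 1, ∀ x y : X, ‖x‖ = 1 → ‖y‖ = 1 → ε ≤ ‖x - y‖ →
          ‖x + y‖ ≤ 2 * (1 - (η * ε) ^ q)) →
        ∀ n : ℕ, 2 ≤ n → ∀ D : ℝ, 1 ≤ D → ∀ f : DH → X,
          (∀ x ∈ Ball n, ∀ y ∈ Ball n,
            (dW x y : ℝ) ≤ ‖f x - f y‖ ∧ ‖f x - f y‖ ≤ D * (dW x y : ℝ)) →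
          K * Real.log n ^ (1 / q) ≤ D :=
  ⟨η / 2 ^ 51, div_pos hη.1 (by positivity), fun _ _ _ _ hX _ hn _ hD _ hf =>
    distortion_lower_bound_uniformly_convex_general hη.1 hη.2.le hq hX (by omega) hD hf⟩
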